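/- Let S be a finite set of evaluators, H ⊆ S with |H| ≥ 2, α : S × S → ℝ symmetric, and real numbers γ, τ, μ_min with 1/2 + γ < τ < μ_min − γ. Suppose (i) α(i,j) ≥ μ_min − γ for all distinct i, j ∈ H, and (ii) α(i,j) ≤ 1/2 + γ for all distinct pairs i, j with at least one member outside H. Then H is τ-consistent and non-trivial, every τ-consistent set C with |C| > 1 satisfies C ⊆ H, and H is the unique maximal τ-consistent non-trivial subset of S (maximal meaning not a proper subset of any other τ-consistent set). (Part (c) of the uniqueness theorem, on the concentration event.) -/

import Mathlib

/-- A set `C` of evaluators is `τ`-consistent for the empirical pairwise agreement `α` if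
every pair of distinct members agrees at rate at least `τ`. -/
def TauConsistent {S : Type*} (α : S → S → ℝ) (τ : ℝ) (C : Finset S) : Prop :=
  ∀ i ∈ C, ∀ j ∈ C, i ≠ j → τ ≤ α i j

section

variable {S : Type*} {α : S → S → ℝ} {τ : ℝ} {H : Finset S}

theorem TauConsistent.subset_of_forall_notMem_lt {C : Finset S} (hC : TauConsistent α τ C)
    (hcard : 1 < C.card) (hout : ∀ i ∉ H, ∀ j, i ≠ j → α i j < τ) : C ⊆ H := by
  intro i hi
  by_contra hiH
  obtain ⟨j, hj, hji⟩ := Finset.exists_mem_ne hcard i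
  exact (hC i hi j hj hji.symm).not_gt (hout i hiH j hji.symm)

theorem TauConsistent.not_ssubset_of_forall_notMem_lt {D : Finset S} (hD : TauConsistent α τ D)
    (hcard : 1 < H.card) (hout : ∀ i ∉ H, ∀ j, i ≠ j → α i j < τ) : ¬ H ⊂ D := by
  intro hHD
  have hDcard : 1 < D.card := hcard.trans (Finset.card_lt_card hHD)
  exact hHD.not_subset (hD.subset_of_forall_notMem_lt hDcard hout)

theorem honest_set_unique_maximal_general {γ μmin : ℝ} (hcard : 1 < H.card)
    (hγτ : 1 / 2 + γ < τ) (hτμ : τ ≤ μmin - γ)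
    (hHH : ∀ i ∈ H, ∀ j ∈ H, i ≠ j → μmin - γ ≤ α i j)
    (hmix : ∀ i ∉ H, ∀ j, i ≠ j → α i j ≤ 1 / 2 + γ) :
    (TauConsistent α τ H ∧ 1 < H.card) ∧
    (∀ C : Finset S, TauConsistent α τ C → 1 < C.card → C ⊆ H) ∧
    (∀ D : Finset S, TauConsistent α τ D → ¬ H ⊂ D) ∧
    (∀ C : Finset S, TauConsistent α τ C → 1 < C.card →
      (∀ D : Finset S, TauConsistent α τ D → ¬ C ⊂ D) → C = H) := by
  have hH : TauConsistent α τ H := fun i hi j hj hij => hτμ.trans (hHH i hi j hj hij)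
  have hout : ∀ i ∉ H, ∀ j, i ≠ j → α i j < τ := fun i hi j hij =>
    (hmix i hi j hij).trans_lt hγτ
  have hsub (C : Finset S) (hC : TauConsistent α τ C) (hCcard : 1 < C.card) : C ⊆ H :=
    hC.subset_of_forall_notMem_lt hCcard hout
  exact ⟨⟨hH, hcard⟩, hsub, fun _ hD => hD.not_ssubset_of_forall_notMem_lt hcard hout,
    fun C hC hCcard hmax => (hsub C hC hCcard).eq_of_not_ssubset (hmax H hH)⟩

end

/-- Part (c) of the uniqueness theorem, on the concentration event: if honest–honest
empirical agreements are all at least `μ_min − γ`, agreements of pairs containing a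
non-honest evaluator are at most `1/2 + γ`, and `1/2 + γ < τ < μ_min − γ`, then the honest
set `H` is `τ`-consistent and non-trivial, every non-trivial `τ`-consistent set is
contained in `H`, and `H` is the unique maximal `τ`-consistent non-trivial set (maximal
meaning not a proper subset of any other `τ`-consistent set). -/
theorem honest_set_unique_maximal {S : Type*} [Fintype S] [DecidableEq S]
    (H : Finset S) (hH : 2 ≤ H.card)
    (α : S → S → ℝ) (hsym : ∀ i j, α i j = α j i)
    (γ τ μmin : ℝ) (hτ1 : 1/2 + γ < τ) (hτ2 : τ < μmin - γ)
    (hHH : ∀ i ∈ H, ∀ j ∈ H, i ≠ j → μmin - γ ≤ α i j)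
    (hmix : ∀ i j : S, i ≠ j → (i ∉ H ∨ j ∉ H) → α i j ≤ 1/2 + γ) :
    (TauConsistent α τ H ∧ 1 < H.card) ∧
    (∀ C : Finset S, TauConsistent α τ C → 1 < C.card → C ⊆ H) ∧
    (∀ D : Finset S, TauConsistent α τ D → ¬ H ⊂ D) ∧
    (∀ C : Finset S, TauConsistent α τ C → 1 < C.card →
      (∀ D : Finset S, TauConsistent α τ D → ¬ C ⊂ D) → C = H) :=
  honest_set_unique_maximal_general hH hτ1 hτ2.le hHH fun i hi j hij => hmix i j hij (Or.inl hi)
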